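/- For every integer d ≥ 0, there exists a real number ε > 0 such that for every finite d-degenerate graph G and every list assignment L for G in which every list has size d+2, the graph G with the list assignment L is weighted ε-flexible. -/

import Mathlib

def IsLColoring {V : Type*} (G : SimpleGraph V) (L : V → Finset ℕ) (φ : V → ℕ) : Prop :=
  (∀ v, φ v ∈ L v) ∧ ∀ ⦃u w : V⦄, G.Adj u w → φ u ≠ φ w

def WeightTotal {V : Type*} [Fintype V] (L : V → Finset ℕ) (w : V → ℕ → ℝ) : ℝ :=
  ∑ v, ∑ c ∈ L v, w v c

def WEpsSat {V : Type*} [Fintype V] (G : SimpleGraph V) (L : V → Finset ℕ)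
    (w : V → ℕ → ℝ) (ε : ℝ) : Prop :=
  ∃ φ : V → ℕ, IsLColoring G L φ ∧ ε * WeightTotal L w ≤ ∑ v, w v (φ v)

def WFlexible {V : Type*} [Fintype V] (G : SimpleGraph V) (L : V → Finset ℕ) (ε : ℝ) : Prop :=
  ∀ w : V → ℕ → ℝ, (∀ v c, 0 ≤ w v c) → WEpsSat G L w ε

/-- `G` is `d`-degenerate: every subgraph of `G` (with at least one vertex)
has a vertex of degree at most `d`. -/
def Degenerate {V : Type*} (G : SimpleGraph V) (d : ℕ) : Prop :=
  ∀ H : G.Subgraph, H.verts.Nonempty → ∃ v ∈ H.verts, (H.neighborSet v).ncard ≤ d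

open Classical in
theorem flex_aux {V : Type} [Fintype V] (G : SimpleGraph V) (L : V → Finset ℕ) (d : ℕ)
    (hG : Degenerate G d) (hL : ∀ v, (L v).card = d + 2) (n : ℕ) :
    ∀ A : Finset V, A.card = n → ∃ (Ω : Type) (_ : Fintype Ω) (μ : Ω → ℝ) (φ : Ω → V → ℕ),
      (∀ ω, 0 ≤ μ ω) ∧ (∑ ω, μ ω = 1) ∧
      (∀ ω, ∀ v ∈ A, φ ω v ∈ L v) ∧
      (∀ ω, ∀ u ∈ A, ∀ v ∈ A, G.Adj u v → φ ω u ≠ φ ω v) ∧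
      (∀ S ⊆ A, ∀ c, (1/2 : ℝ) ^ S.card ≤ ∑ ω, μ ω * (if ∀ u ∈ S, φ ω u ≠ c then 1 else 0)) ∧
      (∀ v ∈ A, ∀ c ∈ L v, (1/2 : ℝ) ^ d / (d + 2) ≤
        ∑ ω, μ ω * (if φ ω v = c then 1 else 0)) := by
  induction n with
  | zero =>
    intro A hA
    rw [Finset.card_eq_zero] at hA
    subst hA
    refine ⟨Unit, inferInstance, fun _ => 1, fun _ _ => 0, by simp, by simp, by simp, by simp, ?_, by simp⟩
    intro S hS c
    rw [Finset.subset_empty] at hS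
    subst hS
    simp
  | succ n ih =>
    intro A hA
    have hne : A.Nonempty := by
      rw [← Finset.card_pos]; omega
    obtain ⟨v, hvA, hvd⟩ := hG ((⊤ : G.Subgraph).induce (A : Set V)) (by simpa using hne)
    have hvA : v ∈ A := by simpa using hvA
    set N := A.filter (fun u => G.Adj v u) with hN
    have hNd : N.card ≤ d := by
      have : (((⊤ : G.Subgraph).induce (A : Set V)).neighborSet v) = (N : Set V) := by
        ext u
        simp [hN, SimpleGraph.Subgraph.mem_neighborSet, hvA]
      rw [this, Set.ncard_coe_finset] at hvd
      exact hvd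
    have hNA : N ⊆ A.erase v := by
      intro u hu
      rw [hN, Finset.mem_filter] at hu
      exact Finset.mem_erase.2 ⟨hu.2.ne', hu.1⟩
    obtain ⟨Ω, _, μ, φ, h0, h1, hmem, hprop, hS, hfix⟩ := ih (A.erase v)
      (by rw [Finset.card_erase_of_mem hvA]; omega)
    let av : Ω → Finset ℕ := fun ω => L v \ N.image (φ ω)
    have hav2 : ∀ ω, 2 ≤ (av ω).card := by
      intro ω
      have h2 := Finset.le_card_sdiff (N.image (φ ω)) (L v)
      have h3 : (N.image (φ ω)).card ≤ N.card := Finset.card_image_le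
      have := hL v
      show 2 ≤ (L v \ N.image (φ ω)).card
      omega
    have havd : ∀ ω, (av ω).card ≤ d + 2 := by
      intro ω
      rw [← hL v]
      exact Finset.card_le_card Finset.sdiff_subset
    have havr : ∀ ω, (2:ℝ) ≤ (av ω).card := fun ω => by exact_mod_cast hav2 ω
    have key : ∀ F : Ω → ℕ → ℝ,
        ∑ p : (Σ ω, {x // x ∈ av ω}), μ p.1 / (av p.1).card * F p.1 p.2 =
        ∑ ω, μ ω / (av ω).card * ∑ x ∈ av ω, F ω x := by
      intro F
      rw [Fintype.sum_sigma]
      refine Finset.sum_congr rfl fun ω _ => ?_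
      dsimp only
      rw [← Finset.mul_sum, Finset.sum_coe_sort (av ω) (fun x => F ω x)]
    have key2 : ∀ F : Ω → ℝ,
        ∑ p : (Σ ω, {x // x ∈ av ω}), μ p.1 / (av p.1).card * F p.1 =
        ∑ ω, μ ω * F ω := by
      intro F
      rw [key (fun ω _ => F ω)]
      refine Finset.sum_congr rfl fun ω _ => ?_
      have := havr ω
      have h : ((av ω).card : ℝ) ≠ 0 := by positivity
      rw [Finset.sum_const, nsmul_eq_mul]
      field_simp
    have hupd : ∀ ω x u, u ≠ v → Function.update (φ ω) v x u = φ ω u := by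
      intro ω x u hu
      exact Function.update_of_ne hu _ _
    refine ⟨Σ ω, {x // x ∈ av ω}, inferInstance, fun p => μ p.1 / (av p.1).card,
      fun p => Function.update (φ p.1) v p.2, ?_, ?_, ?_, ?_, ?_, ?_⟩
    · intro p
      exact div_nonneg (h0 _) (by positivity)
    · have := key2 (fun _ => 1)
      simpa [h1] using this
    · rintro ⟨ω, x, hx⟩ u hu
      by_cases huv : u = v
      · subst huv
        simpa using (Finset.mem_sdiff.1 hx).1
      · simp only [hupd _ _ _ huv]
        exact hmem ω u (Finset.mem_erase.2 ⟨huv, hu⟩)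
    · have hx' : ∀ ω x, x ∈ av ω → ∀ u ∈ A, G.Adj v u → φ ω u ≠ x := by
        intro ω x hx u hu hadj he
        exact (Finset.mem_sdiff.1 hx).2
          (Finset.mem_image.2 ⟨u, Finset.mem_filter.2 ⟨hu, hadj⟩, he⟩)
      rintro ⟨ω, x, hx⟩ u hu w hw hadj
      by_cases huv : u = v
      · subst huv
        have hwu : w ≠ u := hadj.ne'
        simp only [hupd _ _ _ hwu, Function.update_self]
        exact (hx' ω x hx w hw hadj).symm
      · by_cases hwv : w = v
        · subst hwv
          simp only [hupd _ _ _ huv, Function.update_self]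
          exact hx' ω x hx u hu hadj.symm
        · simp only [hupd _ _ _ huv, hupd _ _ _ hwv]
          exact hprop ω u (Finset.mem_erase.2 ⟨huv, hu⟩) w (Finset.mem_erase.2 ⟨hwv, hw⟩) hadj
    · intro S hSA c
      by_cases hvS : v ∈ S
      · have hcard : S.card = (S.erase v).card + 1 := (Finset.card_erase_add_one hvS).symm
        have hb := hS (S.erase v) (Finset.erase_subset_erase v hSA) c
        rw [key (fun ω x => if ∀ u ∈ S, Function.update (φ ω) v x u ≠ c then 1 else 0), hcard,
          pow_succ]
        calc _ ≤ (∑ ω, μ ω * (if ∀ u ∈ S.erase v, φ ω u ≠ c then 1 else 0)) * (1/2 : ℝ) := by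
              gcongr
          _ ≤ _ := by
            rw [Finset.sum_mul]
            refine Finset.sum_le_sum fun ω _ => ?_
            have h2 := havr ω
            have hc0 : (0:ℝ) < (av ω).card := by linarith
            by_cases hok : ∀ u ∈ S.erase v, φ ω u ≠ c
            · rw [if_pos hok]
              have : ((av ω).card : ℝ) - 1 ≤ ∑ x ∈ av ω,
                  (if ∀ u ∈ S, Function.update (φ ω) v x u ≠ c then (1:ℝ) else 0) := by
                have e : ((av ω).card : ℝ) - 1 ≤ (((av ω).erase c).card : ℝ) := by
                  have := Finset.pred_card_le_card_erase (s := av ω) (a := c)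
                  have h : (av ω).card ≤ ((av ω).erase c).card + 1 := by omega
                  have : ((av ω).card : ℝ) ≤ ((av ω).erase c).card + 1 := by exact_mod_cast h
                  linarith
                refine e.trans ?_
                rw [Finset.sum_boole]
                norm_cast
                refine Finset.card_le_card ?_
                intro x hx
                rw [Finset.mem_erase] at hx
                refine Finset.mem_filter.2 ⟨hx.2, fun u hu => ?_⟩
                by_cases huv : u = v
                · subst huv
                  simpa using hx.1
                · rw [hupd _ _ _ huv]
                  exact hok u (Finset.mem_erase.2 ⟨huv, hu⟩)
              calc μ ω * 1 * (1/2) ≤ μ ω / (av ω).card * ((av ω).card - 1) := by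
                    rw [div_mul_eq_mul_div, le_div_iff₀ hc0]
                    nlinarith [h0 ω]
                _ ≤ _ := mul_le_mul_of_nonneg_left this (div_nonneg (h0 _) hc0.le)
            · rw [if_neg hok]
              simp only [mul_zero, zero_mul]
              exact mul_nonneg (div_nonneg (h0 _) hc0.le)
                (Finset.sum_nonneg fun x _ => by split_ifs <;> norm_num)
      · have hb := hS S (fun u hu => Finset.mem_erase.2 ⟨fun h => hvS (h ▸ hu), hSA hu⟩) c
        rw [← key2] at hb
        refine hb.trans (le_of_eq (Finset.sum_congr rfl fun p _ => ?_))
        congr 1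
        refine if_congr (forall₂_congr fun u hu => ?_) rfl rfl
        dsimp only
        rw [hupd _ _ _ (fun h => hvS (h ▸ hu))]
    · intro u hu c hc
      by_cases huv : u = v
      · subst huv
        have hb := hS N hNA c
        rw [key (fun ω x => if Function.update (φ ω) u x u = c then 1 else 0)]
        have hp : (1/2 : ℝ) ^ d ≤ (1/2 : ℝ) ^ N.card :=
          pow_le_pow_of_le_one (by norm_num) (by norm_num) hNd
        rw [div_eq_mul_inv]
        calc _ ≤ (∑ ω, μ ω * (if ∀ u ∈ N, φ ω u ≠ c then 1 else 0)) * ((d:ℝ) + 2)⁻¹ := by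
              gcongr
              exact hp.trans hb
          _ ≤ _ := by
            rw [Finset.sum_mul]
            refine Finset.sum_le_sum fun ω _ => ?_
            have h2 := havr ω
            have hc0 : (0:ℝ) < (av ω).card := by linarith
            have hle : ((av ω).card : ℝ) ≤ d + 2 := by exact_mod_cast havd ω
            by_cases hok : ∀ u ∈ N, φ ω u ≠ c
            · rw [if_pos hok]
              have hca : c ∈ av ω := Finset.mem_sdiff.2 ⟨hc, fun h => by
                obtain ⟨y, hy, hyc⟩ := Finset.mem_image.1 h
                exact hok y hy hyc⟩
              simp only [Function.update_self, Finset.sum_ite_eq', if_pos hca, mul_one]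
              rw [div_eq_mul_inv]
              have := h0 ω
              gcongr
            · rw [if_neg hok]
              simp only [mul_zero, zero_mul]
              exact mul_nonneg (div_nonneg (h0 _) hc0.le)
                (Finset.sum_nonneg fun x _ => by split_ifs <;> norm_num)
      · have hb := hfix u (Finset.mem_erase.2 ⟨huv, hu⟩) c hc
        rw [← key2] at hb
        refine hb.trans (le_of_eq (Finset.sum_congr rfl fun p _ => ?_))
        congr 1
        refine if_congr ?_ rfl rfl
        dsimp only
        rw [hupd _ _ _ huv]

theorem stmt1 (d : ℕ) :
    ∃ ε : ℝ, 0 < ε ∧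
      ∀ (V : Type) [Fintype V] (G : SimpleGraph V) (L : V → Finset ℕ),
        Degenerate G d → (∀ v, (L v).card = d + 2) → WFlexible G L ε := by
  classical
  refine ⟨(1/2 : ℝ) ^ d / (d + 2), by positivity, ?_⟩
  intro V _ G L hG hL w hw
  obtain ⟨Ω, _, μ, φ, h0, h1, hmem, hprop, -, hfix⟩ := flex_aux G L d hG hL _ Finset.univ rfl
  have hΩ : Nonempty Ω := by
    by_contra h
    rw [not_nonempty_iff] at h
    simp at h1
  obtain ⟨ω, hω⟩ := Finite.exists_max (fun ω => ∑ v, w v (φ ω v))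
  refine ⟨φ ω, ⟨fun v => hmem ω v (Finset.mem_univ _), fun u v h =>
    hprop ω u (Finset.mem_univ _) v (Finset.mem_univ _) h⟩, ?_⟩
  calc _ ≤ ∑ v, ∑ c ∈ L v, w v c * ∑ ω, μ ω * (if φ ω v = c then 1 else 0) := by
        rw [WeightTotal, Finset.mul_sum]
        refine Finset.sum_le_sum fun v _ => ?_
        rw [Finset.mul_sum]
        refine Finset.sum_le_sum fun c hc => ?_
        rw [mul_comm]
        exact mul_le_mul_of_nonneg_left (by convert hfix v (Finset.mem_univ _) c hc) (hw v c)
    _ = ∑ ω, μ ω * ∑ v, w v (φ ω v) := by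
        simp only [Finset.mul_sum]
        rw [Finset.sum_comm]
        rw [Finset.sum_comm]
        conv_rhs => rw [Finset.sum_comm]
        refine Finset.sum_congr rfl fun v _ => ?_
        rw [Finset.sum_comm]
        refine Finset.sum_congr rfl fun ω _ => ?_
        have : φ ω v ∈ L v := hmem ω v (Finset.mem_univ _)
        rw [Finset.sum_eq_single_of_mem _ this]
        · simp [mul_comm]
        · intro c _ hc
          simp [Ne.symm hc]
    _ ≤ ∑ ω', μ ω' * ∑ v, w v (φ ω v) :=
        Finset.sum_le_sum fun ω' _ => mul_le_mul_of_nonneg_left (hω ω') (h0 ω')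
    _ = _ := by rw [← Finset.sum_mul, h1, one_mul]
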